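/- Let m ∈ ℕ, let r_i = (x_i, y_i) ∈ ℝ², and let (r_j, w_j)_{j∈N} be a finite family of nodes r_j = (x_j, y_j) ∈ ℝ² with real weights w_j. Write x_{ji} = x_j − x_i, y_{ji} = y_j − y_i. Assume the moment conditions: for every (a,b) ∈ ℕ × ℕ with 1 ≤ a + b ≤ m, ∑_{j∈N} w_j · x_{ji}^a · y_{ji}^b equals 2 if (a,b) = (2,0) or (a,b) = (0,2), and equals 0 otherwise. Then for every real polynomial P in two variables with total degree at most m, ∑_{j∈N} w_j · (P(r_j) − P(r_i)) = (ΔP)(r_i), where ΔP = ∂²P/∂x² + ∂²P/∂y². -/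

import Mathlib

open MvPolynomial

/-!
Both sides of the consistency identity are linear in `P`, so it is enough to compare them on a
spanning set of the polynomials of degree at most `m`. Translation by the centre `c` preserves the
total degree, hence the powers `(X - c) ^ d` with `|d| ≤ m` form such a set. On a nonconstant power
the difference operator is the moment of order `d`. Since translation commutes with partial
derivatives, the Laplacian of `(X - c) ^ d` at `c` is the Laplacian of `X ^ d` at the origin, which
is `2` if `X ^ d` is the square of a variable and `0` otherwise.
-/

section Taylor

variable {σ R : Type*} [CommSemiring R]

/-- The translation `P ↦ P(X + c)`, whose coefficients are the Taylor coefficients of `P` at `c`;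
the multivariate analogue of `Polynomial.taylor`. -/
noncomputable def mvTaylor (c : σ → R) : MvPolynomial σ R →ₐ[R] MvPolynomial σ R :=
  aeval fun i ↦ X i + C (c i)

theorem eval_mvTaylor (c x : σ → R) (P : MvPolynomial σ R) :
    eval x (mvTaylor c P) = eval (x + c) P := by
  have h : (aeval x).comp (mvTaylor c) = aeval (x + c) := by
    ext i
    simp [mvTaylor]
  simpa [aeval_eq_eval] using DFunLike.congr_fun h P

theorem pderiv_mvTaylor (i : σ) (c : σ → R) (P : MvPolynomial σ R) :
    pderiv i (mvTaylor c P) = mvTaylor c (pderiv i P) := by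
  induction P using MvPolynomial.induction_on with
  | C a => simp [mvTaylor, algebraMap_eq]
  | add P Q hP hQ => simp only [map_add, hP, hQ]
  | mul_X P j hP =>
    have hX : pderiv i (mvTaylor c (X j)) = mvTaylor c (pderiv i (X j)) := by
      obtain rfl | hij := eq_or_ne j i
      · simp [mvTaylor]
      · simp [mvTaylor, hij]
    simp only [map_mul, map_add, pderiv_mul, hP, hX]

theorem totalDegree_aeval_le_of_totalDegree_le_one {τ : Type*} {f : σ → MvPolynomial τ R}
    (hf : ∀ i, (f i).totalDegree ≤ 1) (P : MvPolynomial σ R) :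
    (aeval f P).totalDegree ≤ P.totalDegree := by
  rw [aeval_def, eval₂_eq]
  refine totalDegree_finsetSum_le fun d hd ↦ ?_
  calc (algebraMap R (MvPolynomial τ R) (coeff d P) * ∏ i ∈ d.support, f i ^ d i).totalDegree
      ≤ ∑ i ∈ d.support, (f i ^ d i).totalDegree := by
        rw [algebraMap_eq, C_mul']
        exact (totalDegree_smul_le _ _).trans (totalDegree_finsetProd _ _)
    _ ≤ ∑ i ∈ d.support, d i :=
        Finset.sum_le_sum fun i _ ↦ (totalDegree_pow _ _).trans (mul_le_of_le_one_right' (hf i))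
    _ ≤ P.totalDegree := le_totalDegree hd

theorem totalDegree_mvTaylor_le (c : σ → R) (P : MvPolynomial σ R) :
    (mvTaylor c P).totalDegree ≤ P.totalDegree :=
  totalDegree_aeval_le_of_totalDegree_le_one (fun i ↦ (totalDegree_add _ _).trans <| max_le
    ((totalDegree_monomial_le _ _).trans (by simp)) (by simp)) P

theorem constantCoeff_pderiv_pderiv (i : σ) (P : MvPolynomial σ R) :
    constantCoeff (pderiv i (pderiv i P)) = coeff (Finsupp.single i 2) P * 2 := by
  rw [constantCoeff_eq, coeff_pderiv, coeff_pderiv, zero_add, ← Finsupp.single_add]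
  norm_num

end Taylor

section Centered

variable {σ R : Type*} [CommRing R]

theorem mvTaylor_neg_mvTaylor (c : σ → R) (P : MvPolynomial σ R) :
    mvTaylor (-c) (mvTaylor c P) = P := by
  have h : (mvTaylor (-c)).comp (mvTaylor c) = AlgHom.id R _ := by
    ext i : 1
    simp [mvTaylor, algebraMap_eq]
  exact DFunLike.congr_fun h P

/-- The power `(X - c) ^ d` with multi-index `d`, encoded as the translate of `X ^ d` so that the
lemmas on translations apply to it. -/
noncomputable def centeredMonomial (c : σ → R) (d : σ →₀ ℕ) : MvPolynomial σ R :=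
  mvTaylor (-c) (monomial d 1)

@[simp]
theorem centeredMonomial_zero (c : σ → R) : centeredMonomial c 0 = 1 :=
  map_one _

theorem eval_centeredMonomial (c x : σ → R) (d : σ →₀ ℕ) :
    eval x (centeredMonomial c d) = d.prod fun i k ↦ (x i - c i) ^ k := by
  simp [centeredMonomial, eval_mvTaylor, eval_monomial, sub_eq_add_neg]

theorem eval_self_centeredMonomial (c : σ → R) {d : σ →₀ ℕ} (hd : d ≠ 0) :
    eval c (centeredMonomial c d) = 0 := by
  obtain ⟨i, hi⟩ := Finsupp.support_nonempty_iff.2 hd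
  rw [eval_centeredMonomial]
  exact Finset.prod_eq_zero hi (by simp only [sub_self, zero_pow (Finsupp.mem_support_iff.1 hi)])

theorem sum_coeff_mvTaylor_smul_centeredMonomial (c : σ → R) (P : MvPolynomial σ R) :
    ∑ d ∈ (mvTaylor c P).support, coeff d (mvTaylor c P) • centeredMonomial c d = P := by
  conv_rhs => rw [← mvTaylor_neg_mvTaylor c P, (mvTaylor c P).as_sum]
  simp only [centeredMonomial, map_sum, ← map_smul, smul_eq_mul, mul_one]

theorem linearMap_eq_of_eq_on_centeredMonomial {M : Type*} [AddCommMonoid M] [Module R M] {m : ℕ}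
    (c : σ → R) {f g : MvPolynomial σ R →ₗ[R] M}
    (h : ∀ d : σ →₀ ℕ, d.degree ≤ m → f (centeredMonomial c d) = g (centeredMonomial c d))
    {P : MvPolynomial σ R} (hP : P.totalDegree ≤ m) : f P = g P := by
  rw [← sum_coeff_mvTaylor_smul_centeredMonomial c P, map_sum, map_sum]
  refine Finset.sum_congr rfl fun d hd ↦ ?_
  have hdeg : d.degree ≤ m :=
    (le_totalDegree hd).trans ((totalDegree_mvTaylor_le c P).trans hP)
  rw [map_smul, map_smul, h d hdeg]

end Centered

section Laplacian

variable {σ R : Type*} [Fintype σ]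

/-- The Laplacian `∑ i, ∂²/∂Xᵢ²` on polynomials. -/
noncomputable def laplacian [CommSemiring R] : MvPolynomial σ R →ₗ[R] MvPolynomial σ R :=
  ∑ i, (pderiv i).toLinearMap ∘ₗ (pderiv i).toLinearMap

theorem laplacian_apply [CommSemiring R] (P : MvPolynomial σ R) :
    laplacian P = ∑ i, pderiv i (pderiv i P) := by
  simp [laplacian]

theorem eval_laplacian_centeredMonomial [DecidableEq σ] [CommRing R] (c : σ → R) (d : σ →₀ ℕ) :
    eval c (laplacian (centeredMonomial c d)) =
      ∑ i, if d = Finsupp.single i 2 then 2 else 0 := by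
  simp only [laplacian_apply, map_sum, centeredMonomial, pderiv_mvTaylor, eval_mvTaylor,
    add_neg_cancel, eval_zero, constantCoeff_pderiv_pderiv, coeff_monomial, ite_mul, one_mul,
    zero_mul]

end Laplacian

section Consistency

variable {ι σ R : Type*} [CommRing R]

/-- The explicit LABFM operator `P ↦ ∑ j ∈ N, w j * (P (x j) - P c)` at the node `c`, with
stencil `x` and weights `w`. -/
noncomputable def labfmOperator (N : Finset ι) (w : ι → R) (x : ι → σ → R) (c : σ → R) :
    MvPolynomial σ R →ₗ[R] R :=
  ∑ j ∈ N, w j • ((aeval (x j)).toLinearMap - (aeval c).toLinearMap)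

theorem labfmOperator_apply (N : Finset ι) (w : ι → R) (x : ι → σ → R) (c : σ → R)
    (P : MvPolynomial σ R) :
    labfmOperator N w x c P = ∑ j ∈ N, w j * (eval (x j) P - eval c P) := by
  simp [labfmOperator, aeval_eq_eval]

theorem labfmOperator_centeredMonomial (N : Finset ι) (w : ι → R) (x : ι → σ → R) (c : σ → R)
    {d : σ →₀ ℕ} (hd : d ≠ 0) :
    labfmOperator N w x c (centeredMonomial c d) =
      ∑ j ∈ N, w j * d.prod fun i k ↦ (x j i - c i) ^ k := by
  simp only [labfmOperator_apply, eval_self_centeredMonomial c hd, sub_zero, eval_centeredMonomial]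

theorem labfmOperator_eq_of_moments {m : ℕ} {N : Finset ι} {w : ι → R} {x : ι → σ → R}
    {c : σ → R} {L : MvPolynomial σ R →ₗ[R] R} (hL : L 1 = 0)
    (hmom : ∀ d : σ →₀ ℕ, d ≠ 0 → d.degree ≤ m →
      ∑ j ∈ N, w j * d.prod (fun i k ↦ (x j i - c i) ^ k) = L (centeredMonomial c d))
    {P : MvPolynomial σ R} (hP : P.totalDegree ≤ m) :
    labfmOperator N w x c P = L P := by
  refine linearMap_eq_of_eq_on_centeredMonomial c (fun d hd ↦ ?_) hP
  obtain rfl | hd₀ := eq_or_ne d 0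
  · simp [labfmOperator_apply, hL]
  · rw [labfmOperator_centeredMonomial N w x c hd₀, hmom d hd₀ hd]

theorem explicit_labfm_consistency_laplacian_general [Fintype σ] [DecidableEq σ] {m : ℕ}
    {N : Finset ι} {w : ι → R} {x : ι → σ → R} {c : σ → R}
    (hmom : ∀ d : σ →₀ ℕ, d ≠ 0 → d.degree ≤ m →
      ∑ j ∈ N, w j * ∏ i, (x j i - c i) ^ d i = ∑ i, if d = Finsupp.single i 2 then 2 else 0)
    {P : MvPolynomial σ R} (hP : P.totalDegree ≤ m) :
    ∑ j ∈ N, w j * (eval (x j) P - eval c P) = eval c (∑ i, pderiv i (pderiv i P)) := by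
  rw [← labfmOperator_apply, ← laplacian_apply, ← aeval_eq_eval]
  refine labfmOperator_eq_of_moments (L := (aeval c).toLinearMap ∘ₗ laplacian) ?_ ?_ hP
  · simp [laplacian_apply]
  · intro d hd₀ hd
    simp only [Finsupp.prod_pow, hmom d hd₀ hd]
    exact (eval_laplacian_centeredMonomial c d).symm

end Consistency

theorem sum_fin_two_ite_eq_single_two {M : Type*} [AddCommMonoid M] (d : Fin 2 →₀ ℕ) (s : M) :
    (∑ i, if d = Finsupp.single i 2 then s else 0) =
      if (d 0, d 1) = (2, 0) ∨ (d 0, d 1) = (0, 2) then s else 0 := by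
  simp only [Fin.sum_univ_two, Finsupp.ext_iff, Fin.forall_fin_two]
  grind

theorem multiIndex_moment_of_planar_moment {ι R : Type*} [CommRing R] {m : ℕ} {xi yi : R}
    {N : Finset ι} {xj yj w : ι → R}
    (hmom : ∀ a b : ℕ, 1 ≤ a + b → a + b ≤ m →
      ∑ j ∈ N, w j * (xj j - xi) ^ a * (yj j - yi) ^ b =
        if (a, b) = (2, 0) ∨ (a, b) = (0, 2) then 2 else 0)
    (d : Fin 2 →₀ ℕ) (hd₀ : d ≠ 0) (hd : d.degree ≤ m) :
    ∑ j ∈ N, w j * ∏ i, (![xj j, yj j] i - ![xi, yi] i) ^ d i =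
      ∑ i, if d = Finsupp.single i 2 then 2 else 0 := by
  have hdeg : d.degree = d 0 + d 1 := by rw [Finsupp.degree_eq_sum, Fin.sum_univ_two]
  have hpos : 1 ≤ d 0 + d 1 :=
    hdeg ▸ Nat.one_le_iff_ne_zero.2 (d.degree_eq_zero_iff.not.2 hd₀)
  rw [sum_fin_two_ite_eq_single_two, ← hmom (d 0) (d 1) hpos (hdeg ▸ hd)]
  simp [mul_assoc]

/-- Explicit LABFM consistency for the Laplacian. -/
theorem explicit_labfm_consistency_laplacian {ιN : Type*} (m : ℕ) (xi yi : ℝ)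
    (N : Finset ιN) (xj yj w : ιN → ℝ)
    (hmom : ∀ a b : ℕ, 1 ≤ a + b → a + b ≤ m →
      ∑ j ∈ N, w j * (xj j - xi) ^ a * (yj j - yi) ^ b =
        if (a, b) = (2, 0) ∨ (a, b) = (0, 2) then (2 : ℝ) else 0) :
    ∀ P : MvPolynomial (Fin 2) ℝ, P.totalDegree ≤ m →
      ∑ j ∈ N, w j * (eval ![xj j, yj j] P - eval ![xi, yi] P) =
        eval ![xi, yi] (pderiv 0 (pderiv 0 P) + pderiv 1 (pderiv 1 P)) := by
  intro P hP
  rw [← Fin.sum_univ_two fun i ↦ pderiv i (pderiv i P)]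
  exact explicit_labfm_consistency_laplacian_general (multiIndex_moment_of_planar_moment hmom) hP
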